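/- arXiv:2009.13073 — 2 statements merged into one kernel-verified Lean document; each statement's English description precedes it below -/
import Mathlib

section
/- Let s ∈ (0,1), γ ∈ ℝ with γ + 2s > 0, c = max{0, −γ/2}, and let δ₁, δ₂ be real numbers with δ₁ ≤ δ₂, δ₂ > 0, and δ₁/δ₂ + c ≤ s. Let v, y, η ∈ ℝ^d and set A = 1 + |v|² + |η|² + |v∧η|² and B = 1 + |v|² + |y|² + |v∧y|². If A ≤ B^{δ₂}, then B^{δ₁−1−δ₂} · (⟨y,η⟩ + (v∧y)·(v∧η))² ≤ ⟨v⟩^γ · A^s. -/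
open scoped RealInnerProductSpace

/-!
For fixed `v`, the form `Q(y, η) = ⟨y,η⟩ + (v∧y)·(v∧η)` is positive semidefinite, so Cauchy–Schwarz
gives `Q(y, η)² ≤ B A`, and the left side is at most `B^(δ₁-δ₂) A`. As `δ₁ - δ₂ ≤ 0`, the cutoff
`A ≤ B^δ₂` turns this into `A^(δ₁/δ₂)`. The remaining room `c = max 0 (-γ/2)` in the exponent pays
for the weight when `γ < 0`: since `⟨v⟩² ≤ A`, one has `1 ≤ ⟨v⟩^γ A^c`.
-/

section Rpow

variable {a b p q r s x γ : ℝ}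

lemma rpow_sub_mul_le_rpow_div (ha : 0 < a) (hb : 0 ≤ b) (hq : 0 < q) (hpq : p ≤ q)
    (hab : a ≤ b ^ q) : b ^ (p - q) * a ≤ a ^ (p / q) := by
  have hexp : p / q - 1 ≤ 0 := sub_nonpos.2 ((div_le_one hq).2 hpq)
  calc b ^ (p - q) * a = (b ^ q) ^ (p / q - 1) * a := by
        rw [← Real.rpow_mul hb, mul_sub, mul_div_cancel₀ p hq.ne', mul_one]
    _ ≤ a ^ (p / q - 1) * a :=
        mul_le_mul_of_nonneg_right (Real.rpow_le_rpow_of_nonpos ha hab hexp) ha.le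
    _ = a ^ (p / q) := by rw [← Real.rpow_add_one ha.ne', sub_add_cancel]

lemma one_le_rpow_mul_rpow_max (hx : 1 ≤ x) (hxa : x ^ 2 ≤ a) :
    1 ≤ x ^ γ * a ^ max 0 (-γ / 2) := by
  have hx₀ : 0 < x := one_pos.trans_le hx
  calc 1 ≤ x ^ (γ + 2 * max 0 (-γ / 2)) :=
        Real.one_le_rpow hx (by linarith [le_max_right 0 (-γ / 2)])
    _ = x ^ γ * (x ^ 2) ^ max 0 (-γ / 2) := by
        rw [Real.rpow_add hx₀, Real.rpow_mul hx₀.le, Real.rpow_two]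
    _ ≤ x ^ γ * a ^ max 0 (-γ / 2) := by gcongr

lemma rpow_le_rpow_mul_rpow_of_add_max_le (hx : 1 ≤ x) (hxa : x ^ 2 ≤ a)
    (hrs : r + max 0 (-γ / 2) ≤ s) : a ^ r ≤ x ^ γ * a ^ s := by
  have ha : 1 ≤ a := (one_le_pow₀ hx).trans hxa
  have ha₀ : 0 < a := one_pos.trans_le ha
  calc a ^ r ≤ x ^ γ * a ^ max 0 (-γ / 2) * a ^ r :=
        le_mul_of_one_le_left (by positivity) (one_le_rpow_mul_rpow_max hx hxa)
    _ = x ^ γ * a ^ (r + max 0 (-γ / 2)) := by rw [mul_assoc, ← Real.rpow_add ha₀, add_comm r]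
    _ ≤ x ^ γ * a ^ s := by gcongr

end Rpow

section Wedge

variable {E : Type*} [SeminormedAddCommGroup E] [InnerProductSpace ℝ E]

/-- The bilinear form `(y, η) ↦ (v∧y)·(v∧η)` for fixed `v`, given by the Gram determinant
`|v|²⟨y,η⟩ - ⟨v,y⟩⟨v,η⟩` so that no exterior power is needed. -/
noncomputable def wedgeForm (v : E) : LinearMap.BilinForm ℝ E :=
  ‖v‖ ^ 2 • innerₗ E - (innerₗ E v).smulRight (innerₗ E v)

/-- The bilinear form `(y, η) ↦ ⟨y,η⟩ + (v∧y)·(v∧η)`, which is squared in the error term `I₃`. -/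
noncomputable def innerAddWedgeForm (v : E) : LinearMap.BilinForm ℝ E :=
  innerₗ E + wedgeForm v

/-- The weight `1 + |v|² + |η|² + |v∧η|²`, written `A` at `(v, η)` and `B` at `(v, y)`. -/
noncomputable def wedgeWeight (v η : E) : ℝ :=
  1 + ‖v‖ ^ 2 + innerAddWedgeForm v η η

lemma wedgeForm_apply (v y η : E) :
    wedgeForm v y η = ‖v‖ ^ 2 * ⟪y, η⟫ - ⟪v, y⟫ * ⟪v, η⟫ := rfl

lemma innerAddWedgeForm_apply (v y η : E) :
    innerAddWedgeForm v y η = ⟪y, η⟫ + (‖v‖ ^ 2 * ⟪y, η⟫ - ⟪v, y⟫ * ⟪v, η⟫) := rfl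

lemma wedgeWeight_eq (v η : E) :
    wedgeWeight v η = 1 + ‖v‖ ^ 2 + ‖η‖ ^ 2 + (‖v‖ ^ 2 * ‖η‖ ^ 2 - ⟪v, η⟫ ^ 2) := by
  rw [wedgeWeight, innerAddWedgeForm_apply, real_inner_self_eq_norm_sq, ← sq, ← add_assoc]

lemma innerAddWedgeForm_isSymm (v : E) : (innerAddWedgeForm v).IsSymm :=
  ⟨fun y η ↦ by
    simp only [innerAddWedgeForm_apply, real_inner_comm y η, mul_comm ⟪v, y⟫]⟩

lemma wedgeForm_self_nonneg (v η : E) : 0 ≤ wedgeForm v η η := by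
  rw [wedgeForm_apply, sub_nonneg, ← real_inner_self_eq_norm_sq]
  exact real_inner_mul_inner_self_le v η

lemma innerAddWedgeForm_self_nonneg (v η : E) : 0 ≤ innerAddWedgeForm v η η :=
  add_nonneg real_inner_self_nonneg (wedgeForm_self_nonneg v η)

lemma one_add_norm_sq_le_wedgeWeight (v η : E) : 1 + ‖v‖ ^ 2 ≤ wedgeWeight v η :=
  le_add_of_nonneg_right (innerAddWedgeForm_self_nonneg v η)

lemma wedgeWeight_pos (v η : E) : 0 < wedgeWeight v η :=
  lt_of_lt_of_le (by positivity) (one_add_norm_sq_le_wedgeWeight v η)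

lemma innerAddWedgeForm_sq_le_wedgeWeight_mul (v y η : E) :
    innerAddWedgeForm v y η ^ 2 ≤ wedgeWeight v y * wedgeWeight v η := by
  have self_le_weight (z : E) : innerAddWedgeForm v z z ≤ wedgeWeight v z :=
    le_add_of_nonneg_left (by positivity)
  calc innerAddWedgeForm v y η ^ 2
      ≤ innerAddWedgeForm v y y * innerAddWedgeForm v η η :=
        (innerAddWedgeForm v).apply_sq_le_of_symm (innerAddWedgeForm_self_nonneg v)
          (LinearMap.BilinForm.isSymm_iff.1 (innerAddWedgeForm_isSymm v)) y η
    _ ≤ wedgeWeight v y * wedgeWeight v η :=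
        mul_le_mul (self_le_weight y) (self_le_weight η) (innerAddWedgeForm_self_nonneg v η)
          (wedgeWeight_pos v y).le

theorem stmt_8_general {s γ δ₁ δ₂ : ℝ} (hδ₁₂ : δ₁ ≤ δ₂) (hδ₂ : 0 < δ₂)
    (hδ : δ₁ / δ₂ + max 0 (-γ / 2) ≤ s) {v y η : E}
    (hsupp : wedgeWeight v η ≤ wedgeWeight v y ^ δ₂) :
    wedgeWeight v y ^ (δ₁ - 1 - δ₂) * innerAddWedgeForm v y η ^ 2 ≤
      √(1 + ‖v‖ ^ 2) ^ γ * wedgeWeight v η ^ s := by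
  have hA : 0 < wedgeWeight v η := wedgeWeight_pos v η
  have hB : 0 < wedgeWeight v y := wedgeWeight_pos v y
  have one_le_bracket : 1 ≤ √(1 + ‖v‖ ^ 2) :=
    Real.one_le_sqrt.2 (le_add_of_nonneg_right (sq_nonneg _))
  have bracket_sq_le : √(1 + ‖v‖ ^ 2) ^ 2 ≤ wedgeWeight v η :=
    (Real.sq_sqrt (by positivity)).trans_le (one_add_norm_sq_le_wedgeWeight v η)
  calc wedgeWeight v y ^ (δ₁ - 1 - δ₂) * innerAddWedgeForm v y η ^ 2
      ≤ wedgeWeight v y ^ (δ₁ - 1 - δ₂) * (wedgeWeight v y * wedgeWeight v η) := by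
        gcongr
        exact innerAddWedgeForm_sq_le_wedgeWeight_mul v y η
    _ = wedgeWeight v y ^ (δ₁ - δ₂) * wedgeWeight v η := by
        rw [← mul_assoc, ← Real.rpow_add_one hB.ne', sub_right_comm, sub_add_cancel]
    _ ≤ wedgeWeight v η ^ (δ₁ / δ₂) := rpow_sub_mul_le_rpow_div hA hB.le hδ₂ hδ₁₂ hsupp
    _ ≤ √(1 + ‖v‖ ^ 2) ^ γ * wedgeWeight v η ^ s :=
        rpow_le_rpow_mul_rpow_of_add_max_le one_le_bracket bracket_sq_le hδ

end Wedge

/-- Bound for the error term `I₃` on the support of the cutoff: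
if `A ≤ B^δ₂` then `B^{δ₁−1−δ₂}·(⟨y,η⟩ + (v∧y)·(v∧η))² ≤ ⟨v⟩^γ·A^s`. -/
theorem stmt_8 (s γ : ℝ) (hs0 : 0 < s) (hs1 : s < 1) (hγ : 0 < γ + 2 * s)
    (δ₁ δ₂ : ℝ) (hδ₁₂ : δ₁ ≤ δ₂) (hδ₂ : 0 < δ₂)
    (hδ : δ₁ / δ₂ + max 0 (-γ / 2) ≤ s)
    (d : ℕ) (v y η : EuclideanSpace ℝ (Fin d))
    (A B : ℝ)
    (hA : A = 1 + ‖v‖ ^ 2 + ‖η‖ ^ 2 + (‖v‖ ^ 2 * ‖η‖ ^ 2 - ⟪v, η⟫ ^ 2))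
    (hB : B = 1 + ‖v‖ ^ 2 + ‖y‖ ^ 2 + (‖v‖ ^ 2 * ‖y‖ ^ 2 - ⟪v, y⟫ ^ 2))
    (hsupp : A ≤ B ^ δ₂) :
    B ^ (δ₁ - 1 - δ₂) * (⟪y, η⟫ + (‖v‖ ^ 2 * ⟪y, η⟫ - ⟪v, y⟫ * ⟪v, η⟫)) ^ 2 ≤
      Real.sqrt (1 + ‖v‖ ^ 2) ^ γ * A ^ s := by
  rw [← wedgeWeight_eq] at hA hB
  subst hA hB
  exact stmt_8_general hδ₁₂ hδ₂ hδ hsupp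
end

section
/- Let s ∈ (0,1), γ ∈ ℝ with γ + 2s > 0, and K₀ ≥ 1. Define a(v,η) = ⟨v⟩^γ (1 + |v|² + |η|² + |v∧η|²)^s + K₀⟨v⟩^{γ+2s}. Then for every l ≥ 0, k ≥ 0 and δ ∈ (0,1] there exists p₀ ≥ 1 such that for every p ≥ p₀ there exists a constant C > 0 (depending on δ, l, k, p) with: for all t ∈ (0,1] and all v, η ∈ ℝ^d, t^{p−1/2} ≤ δ · a(v,η)^{1/2} · t^p + C · ⟨v⟩^{−l} ⟨η⟩^{−k}. -/
open scoped RealInnerProductSpace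

/-!
The inequality is a dichotomy on the size of `A t^{1/2}`, where `A = δ a^{1/2}`: either
`A t^{1/2} ≥ 1`, and then `t^{p-1/2} ≤ A t^p`, or `t < A⁻²`, and then
`t^{p-1/2} ≤ A^{-(2p-1)} = δ^{-(2p-1)} a^{-(p-1/2)}`. It remains to see that a large power of `a`
beats `⟨v⟩^l ⟨η⟩^k`. Since `1 + |v|² + |η|² + |v∧η|²` dominates both `⟨v⟩²` and `⟨η⟩²`, splitting
its exponent `s` gives `a ≥ ⟨v⟩^{γ+2s-ε} ⟨η⟩^ε` for `0 ≤ ε ≤ 2s`, and because `γ + 2s > 0` both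
exponents are positive for small `ε > 0`.
-/

section RealPowers

lemma rpow_mul_rpow_le_rpow_add {x y z α β : ℝ} (hx : 0 ≤ x) (hy : 0 ≤ y) (hxz : x ≤ z)
    (hyz : y ≤ z) (hα : 0 ≤ α) (hβ : 0 ≤ β) : x ^ α * y ^ β ≤ z ^ (α + β) := by
  have hz : 0 ≤ z := hx.trans hxz
  rw [Real.rpow_add_of_nonneg hz hα hβ]
  gcongr

lemma rpow_le_mul_rpow_add_rpow_neg_div {t A q r : ℝ} (ht : 0 < t) (hA : 0 < A) (hq : 0 ≤ q)
    (hr : 0 < r) : t ^ q ≤ A * t ^ (q + r) + A ^ (-(q / r)) := by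
  rcases le_total 1 (A * t ^ r) with hlarge | hsmall
  · calc t ^ q ≤ A * t ^ r * t ^ q := le_mul_of_one_le_left (by positivity) hlarge
      _ = A * t ^ (q + r) := by rw [Real.rpow_add ht]; ring
      _ ≤ A * t ^ (q + r) + A ^ (-(q / r)) := le_add_of_nonneg_right (by positivity)
  · have htr : t ^ r ≤ A⁻¹ := by rwa [← one_div, le_div_iff₀' hA]
    calc t ^ q = (t ^ r) ^ (q / r) := by rw [← Real.rpow_mul ht.le, mul_div_cancel₀ q hr.ne']
      _ ≤ A⁻¹ ^ (q / r) := by gcongr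
      _ = A ^ (-(q / r)) := by rw [Real.inv_rpow hA.le, Real.rpow_neg hA.le]
      _ ≤ A * t ^ (q + r) + A ^ (-(q / r)) := le_add_of_nonneg_left (by positivity)

end RealPowers

section JapaneseBracket

variable {E : Type*} [SeminormedAddCommGroup E]

/-- The Japanese bracket `⟨v⟩ = (1 + |v|²)^{1/2}`, in whose powers decay is measured. -/
noncomputable def japaneseBracket (v : E) : ℝ := √(1 + ‖v‖ ^ 2)

lemma japaneseBracket_sq (v : E) : japaneseBracket v ^ 2 = 1 + ‖v‖ ^ 2 :=
  Real.sq_sqrt (by positivity)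

lemma one_le_japaneseBracket (v : E) : 1 ≤ japaneseBracket v :=
  Real.one_le_sqrt.mpr (le_add_of_nonneg_right (sq_nonneg ‖v‖))

lemma japaneseBracket_pos (v : E) : 0 < japaneseBracket v :=
  zero_lt_one.trans_le (one_le_japaneseBracket v)

end JapaneseBracket

section BoltzmannWeight

variable {E : Type*} [SeminormedAddCommGroup E] [InnerProductSpace ℝ E]

/-- The squared norm `|v∧w|²` of the exterior product of two vectors, encoded as their Gram
determinant. -/
noncomputable def wedgeNormSq (v w : E) : ℝ := ‖v‖ ^ 2 * ‖w‖ ^ 2 - ⟪v, w⟫ ^ 2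

lemma wedgeNormSq_nonneg (v w : E) : 0 ≤ wedgeNormSq v w := by
  rw [wedgeNormSq, ← mul_pow, sub_nonneg, sq_le_sq, abs_of_nonneg (a := ‖v‖ * ‖w‖) (by positivity)]
  exact abs_real_inner_le_norm v w

/-- The admissible weight `a(v, η)` of the linearized non-cutoff Boltzmann operator, with `v` the
velocity and `η` its dual (frequency) variable. -/
noncomputable def boltzmannWeight (s γ K₀ : ℝ) (v η : E) : ℝ :=
  japaneseBracket v ^ γ * (1 + ‖v‖ ^ 2 + ‖η‖ ^ 2 + wedgeNormSq v η) ^ s +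
    K₀ * japaneseBracket v ^ (γ + 2 * s)

variable {s γ K₀ : ℝ}

lemma japaneseBracket_rpow_mul_rpow_le_boltzmannWeight {ε : ℝ} (hε : 0 ≤ ε) (hεs : ε ≤ 2 * s)
    (hK₀ : 0 ≤ K₀) (v η : E) :
    japaneseBracket v ^ (γ + 2 * s - ε) * japaneseBracket η ^ ε ≤ boltzmannWeight s γ K₀ v η := by
  have hV := japaneseBracket_pos v
  have hN := japaneseBracket_pos η
  have hW := wedgeNormSq_nonneg v η
  set Q := 1 + ‖v‖ ^ 2 + ‖η‖ ^ 2 + wedgeNormSq v η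
  have hVQ : japaneseBracket v ^ 2 ≤ Q := by
    rw [japaneseBracket_sq]; linarith [sq_nonneg ‖η‖]
  have hNQ : japaneseBracket η ^ 2 ≤ Q := by
    rw [japaneseBracket_sq]; linarith [sq_nonneg ‖v‖]
  calc japaneseBracket v ^ (γ + 2 * s - ε) * japaneseBracket η ^ ε
      = japaneseBracket v ^ γ *
          ((japaneseBracket v ^ 2) ^ (s - ε / 2) * (japaneseBracket η ^ 2) ^ (ε / 2)) := by
        rw [← Real.rpow_natCast_mul hV.le, ← Real.rpow_natCast_mul hN.le, ← mul_assoc,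
          ← Real.rpow_add hV]
        congr 2 <;> push_cast <;> ring
    _ ≤ japaneseBracket v ^ γ * Q ^ (s - ε / 2 + ε / 2) := by
        gcongr
        exact rpow_mul_rpow_le_rpow_add (sq_nonneg _) (sq_nonneg _) hVQ hNQ (by linarith)
          (by linarith)
    _ = japaneseBracket v ^ γ * Q ^ s := by rw [sub_add_cancel]
    _ ≤ boltzmannWeight s γ K₀ v η := le_add_of_nonneg_right (by positivity)

lemma boltzmannWeight_pos (hK₀ : 0 ≤ K₀) (v η : E) :
    0 < boltzmannWeight s γ K₀ v η := by
  have hV := japaneseBracket_pos v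
  have hW := wedgeNormSq_nonneg v η
  rw [boltzmannWeight]
  positivity

lemma exists_japaneseBracket_rpow_mul_rpow_le_boltzmannWeight_rpow (hs : 0 < s)
    (hγ : 0 < γ + 2 * s) (hK₀ : 0 ≤ K₀) (l k : ℝ) :
    ∃ m₀ : ℝ, 0 ≤ m₀ ∧ ∀ m : ℝ, m₀ ≤ m → ∀ v η : E,
      japaneseBracket v ^ l * japaneseBracket η ^ k ≤ boltzmannWeight s γ K₀ v η ^ m := by
  obtain ⟨ε, hε, hεmin⟩ : ∃ ε, 0 < ε ∧ ε < min (2 * s) (γ + 2 * s) :=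
    exists_between (lt_min (by linarith) hγ)
  obtain ⟨hεs, hεγ⟩ := lt_min_iff.mp hεmin
  rw [← sub_pos] at hεγ
  refine ⟨max 0 (max (l / (γ + 2 * s - ε)) (k / ε)), le_max_left _ _, fun m hm v η => ?_⟩
  obtain ⟨hm, hlm, hkm⟩ : 0 ≤ m ∧ l / (γ + 2 * s - ε) ≤ m ∧ k / ε ≤ m := by
    simpa only [max_le_iff] using hm
  have hV := japaneseBracket_pos v
  have hN := japaneseBracket_pos η
  calc japaneseBracket v ^ l * japaneseBracket η ^ k
      ≤ japaneseBracket v ^ ((γ + 2 * s - ε) * m) * japaneseBracket η ^ (ε * m) := by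
        gcongr
        · exact one_le_japaneseBracket v
        · rwa [← div_le_iff₀' hεγ]
        · exact one_le_japaneseBracket η
        · rwa [← div_le_iff₀' hε]
    _ = (japaneseBracket v ^ (γ + 2 * s - ε) * japaneseBracket η ^ ε) ^ m := by
        rw [Real.mul_rpow (by positivity) (by positivity), Real.rpow_mul hV.le,
          Real.rpow_mul hN.le]
    _ ≤ boltzmannWeight s γ K₀ v η ^ m := by
        gcongr
        exact japaneseBracket_rpow_mul_rpow_le_boltzmannWeight hε.le hεs.le hK₀ v η

theorem stmt_12_general (hs : 0 < s) (hγ : 0 < γ + 2 * s) (hK₀ : 0 ≤ K₀) (l k : ℝ) :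
    ∃ p₀ : ℝ, 1 ≤ p₀ ∧ ∀ p : ℝ, p₀ ≤ p → ∀ δ : ℝ, 0 < δ → ∀ t : ℝ, 0 < t → ∀ v η : E,
      t ^ (p - 1 / 2) ≤
        δ * boltzmannWeight s γ K₀ v η ^ (1 / 2 : ℝ) * t ^ p +
          δ ^ (-(2 * p - 1)) * japaneseBracket v ^ (-l) * japaneseBracket η ^ (-k) := by
  obtain ⟨m₀, hm₀, hgrowth⟩ :=
    exists_japaneseBracket_rpow_mul_rpow_le_boltzmannWeight_rpow (E := E) hs hγ hK₀ l k
  refine ⟨m₀ + 1, by linarith, fun p hp δ hδ t ht v η => ?_⟩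
  have hV := japaneseBracket_pos v
  have hN := japaneseBracket_pos η
  have ha : 0 < boltzmannWeight s γ K₀ v η := boltzmannWeight_pos hK₀ v η
  set a := boltzmannWeight s γ K₀ v η
  have hdecay : a ^ (-(p - 1 / 2)) ≤ japaneseBracket v ^ (-l) * japaneseBracket η ^ (-k) := by
    rw [Real.rpow_neg ha.le, Real.rpow_neg hV.le, Real.rpow_neg hN.le, ← mul_inv]
    exact inv_anti₀ (by positivity) (hgrowth _ (by linarith) v η)
  calc t ^ (p - 1 / 2)
      ≤ δ * a ^ (1 / 2 : ℝ) * t ^ (p - 1 / 2 + 1 / 2) +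
          (δ * a ^ (1 / 2 : ℝ)) ^ (-((p - 1 / 2) / (1 / 2))) :=
        rpow_le_mul_rpow_add_rpow_neg_div ht (by positivity) (by linarith) (by norm_num)
    _ = δ * a ^ (1 / 2 : ℝ) * t ^ p + δ ^ (-(2 * p - 1)) * a ^ (-(p - 1 / 2)) := by
        rw [Real.mul_rpow hδ.le (by positivity), ← Real.rpow_mul ha.le]
        ring_nf
    _ ≤ δ * a ^ (1 / 2 : ℝ) * t ^ p +
          δ ^ (-(2 * p - 1)) * japaneseBracket v ^ (-l) * japaneseBracket η ^ (-k) := by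
        rw [mul_assoc (δ ^ _)]
        gcongr

end BoltzmannWeight

/-- Absorption of the time weight into the symbol `a`:
for every `l, k ≥ 0` and `δ ∈ (0,1]` there is `p₀ ≥ 1` such that for every `p ≥ p₀`
there is `C > 0` with `t^{p−1/2} ≤ δ·a(v,η)^{1/2}·t^p + C·⟨v⟩^{−l}⟨η⟩^{−k}`
for all `t ∈ (0,1]` and all `v, η`. -/
theorem stmt_12 (s γ K₀ : ℝ) (hs0 : 0 < s) (hs1 : s < 1) (hγ : 0 < γ + 2 * s)
    (hK₀ : 1 ≤ K₀) (d : ℕ) :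
    ∀ l k δ : ℝ, 0 ≤ l → 0 ≤ k → 0 < δ → δ ≤ 1 →
      ∃ p₀ : ℝ, 1 ≤ p₀ ∧ ∀ p : ℝ, p₀ ≤ p → ∃ C : ℝ, 0 < C ∧
        ∀ t : ℝ, 0 < t → t ≤ 1 → ∀ v η : EuclideanSpace ℝ (Fin d),
          t ^ (p - 1 / 2) ≤
            δ * (Real.sqrt (1 + ‖v‖ ^ 2) ^ γ *
                  (1 + ‖v‖ ^ 2 + ‖η‖ ^ 2 + (‖v‖ ^ 2 * ‖η‖ ^ 2 - ⟪v, η⟫ ^ 2)) ^ s +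
                K₀ * Real.sqrt (1 + ‖v‖ ^ 2) ^ (γ + 2 * s)) ^ (1 / 2 : ℝ) * t ^ p +
              C * Real.sqrt (1 + ‖v‖ ^ 2) ^ (-l) * Real.sqrt (1 + ‖η‖ ^ 2) ^ (-k) := by
  intro l k δ _ _ hδ _
  obtain ⟨p₀, hp₀, h⟩ := stmt_12_general (E := EuclideanSpace ℝ (Fin d)) hs0 hγ
    (zero_le_one.trans hK₀) l k
  exact ⟨p₀, hp₀, fun p hp => ⟨δ ^ (-(2 * p - 1)), Real.rpow_pos_of_pos hδ _,
    fun t ht _ v η => h p hp δ hδ t ht v η⟩⟩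
end
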